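/- Let F be a field of characteristic 2, let p = x^d + p₁x^{d-1} + … + p_d ∈ F[x] be a monic irreducible polynomial of degree d that is inseparable (i.e., its formal derivative is zero, equivalently p_k = 0 for all odd k), let L = F[x]/(p), and let t_p : L → F be the F-linear map with t_p(x^j) = 0 for 0 ≤ j ≤ d-2 and t_p(x^{d-1}) = 1. Then for every a ∈ F, the Scharlau transfer t_p∘⟨⟨x; a]] (a quadratic form of dimension 4d over F) is Witt equivalent to the 2-fold quadratic Pfister form ⟨⟨p_d; a]] over F. -/

import Mathlib

open QuadraticMap Polynomial

/-- The binary quadratic form `[a,b] : (u,v) ↦ a u² + u v + b v²` over `K`. -/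
noncomputable def binQF (K : Type*) [CommRing K] (a b : K) : QuadraticForm K (K × K) :=
  a • QuadraticMap.linMulLin (LinearMap.fst K K K) (LinearMap.fst K K K)
    + QuadraticMap.linMulLin (LinearMap.fst K K K) (LinearMap.snd K K K)
    + b • QuadraticMap.linMulLin (LinearMap.snd K K K) (LinearMap.snd K K K)

/-- The hyperbolic plane `(u,v) ↦ u v` over `K`. -/
noncomputable def hypQF (K : Type*) [CommRing K] : QuadraticForm K (K × K) :=
  QuadraticMap.linMulLin (LinearMap.fst K K K) (LinearMap.snd K K K)

/-- The orthogonal sum of `r` copies of the hyperbolic plane over `K`. -/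
noncomputable def hypPow (K : Type*) [CommRing K] (r : ℕ) : QuadraticForm K (Fin r → K × K) :=
  QuadraticMap.pi fun _ => hypQF K

/-- Witt equivalence of quadratic forms over `K`: `Q₁ ⊥ H^{⊥r}` is isometric to
`Q₂ ⊥ H^{⊥s}` for some `r, s`. -/
def WittEquiv {K : Type*} [CommRing K] {V₁ V₂ : Type*} [AddCommGroup V₁] [Module K V₁]
    [AddCommGroup V₂] [Module K V₂]
    (Q₁ : QuadraticForm K V₁) (Q₂ : QuadraticForm K V₂) : Prop :=
  ∃ r s : ℕ, (Q₁.prod (hypPow K r)).Equivalent (Q₂.prod (hypPow K s))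

/-- The Scharlau transfer of a quadratic form `Q` over `L` along an `F`-linear functional
`t : L → F`: the quadratic form `t ∘ Q` over `F` on `V` viewed as an `F`-vector space. -/
noncomputable def scharlauTransfer {F L : Type*} [Field F] [CommRing L] [Algebra F L]
    (V : Type*) [AddCommGroup V] [Module L V] [Module F V] [IsScalarTower F L V]
    (t : L →ₗ[F] F) (Q : QuadraticForm L V) : QuadraticForm F V :=
  t.compQuadraticMap' Q

/-- The 2-fold quadratic Pfister form `⟨⟨c; e]] = [1,e] ⊥ c·[1,e]` over `K`. -/
noncomputable def pfister2QF (K : Type*) [CommRing K] (c e : K) :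
    QuadraticForm K ((K × K) × (K × K)) :=
  (binQF K 1 e).prod (c • binQF K 1 e)

/-!
The transfer of `x · [1, a]` is the tensor product of `[1, a]` with the symmetric bilinear form
`(w, z) ↦ t_p (x w z)`. With `deg p = 2n + 2`, the polynomials of degree less than `n` are
isotropic for this bilinear form, and modulo them their orthogonal complement is spanned by
`x ^ n` and `(p - p_d) / x`, on which it is `⟨1, -p_d⟩`. On the summand `[1, a]`, the vectors
`(u, 0)` are isotropic because `t_p` kills squares, `p` being a polynomial in `x²`. Passing to
`N^⊥ / N` for the totally isotropic subspace `N` built from these two pieces splits off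
hyperbolic planes and leaves `⟨⟨p_d; a]]`.
-/

section HyperbolicPlanes

theorem hypPow_apply {K : Type*} [CommRing K] {r : ℕ} (x : Fin r → K × K) :
    hypPow K r x = ∑ i, (x i).1 * (x i).2 := by
  simp [hypPow, hypQF, QuadraticMap.pi_apply]

theorem dualProd_equivalent_hypPow (K N : Type*) [CommRing K] [StrongRankCondition K]
    [AddCommGroup N] [Module K N] [Module.Free K N] [Module.Finite K N] :
    (QuadraticForm.dualProd K N).Equivalent (hypPow K (Module.finrank K N)) := by
  let b := Module.finBasis K N
  let e : (Module.Dual K N × N) ≃ₗ[K] (Fin (Module.finrank K N) → K × K) :=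
    (b.dualBasis.equivFun.prodCongr b.equivFun) ≪≫ₗ
      { Equiv.arrowProdEquivProdArrow _ (fun _ => K) (fun _ => K) |>.symm with
        map_add' := fun _ _ => rfl
        map_smul' := fun _ _ => rfl }
  refine ⟨⟨e, fun x => ?_⟩⟩
  calc hypPow K _ (e x) = ∑ i, b.dualBasis.equivFun x.1 i * b.equivFun x.2 i := hypPow_apply _
    _ = x.1 (∑ i, b.equivFun x.2 i • b i) := by
      rw [map_sum]
      simp [mul_comm]
    _ = x.1 x.2 := by rw [b.sum_equivFun]

theorem WittEquiv.of_equivalent_prod_hypPow {K V W : Type*} [CommRing K] [AddCommGroup V]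
    [Module K V] [AddCommGroup W] [Module K W] {Q : QuadraticForm K V} {R : QuadraticForm K W}
    {s : ℕ} (h : Q.Equivalent (R.prod (hypPow K s))) : WittEquiv Q R := by
  let e : (Q.prod (hypPow K 0)).IsometryEquiv Q :=
    { LinearEquiv.prodUnique with
      map_app' := fun x => by simp [hypPow_apply, LinearEquiv.prodUnique] }
  exact ⟨0, s, QuadraticMap.Equivalent.trans ⟨e⟩ h⟩

end HyperbolicPlanes

section IsotropicReduction

variable {K V W N : Type*} [Field K] [AddCommGroup V] [Module K V] [AddCommGroup W] [Module K W]
  [AddCommGroup N] [Module K N]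

theorem exists_isotropic_dual_lift [FiniteDimensional K N] (Q : QuadraticForm K V)
    (j : N →ₗ[K] V) (hQj : ∀ n, Q (j n) = 0)
    (hrad : ∀ n, (∀ v, polar Q (j n) v = 0) → n = 0) :
    ∃ ψ : Module.Dual K N →ₗ[K] V,
      (∀ f, Q (ψ f) = 0) ∧ ∀ f n, polar Q (ψ f) (j n) = f n := by
  have hinj : Function.Injective (Q.polarBilin ∘ₗ j) := by
    rw [injective_iff_map_eq_zero]
    exact fun n hn => hrad n fun v => LinearMap.congr_fun hn v
  obtain ⟨φ, hφ⟩ := (Q.polarBilin ∘ₗ j).flip.exists_rightInverse_of_surjective <|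
    LinearMap.range_eq_top.2 <| LinearMap.flip_surjective_iff₁.2 hinj
  have hφj (f : Module.Dual K N) (n : N) : polar Q (j n) (φ f) = f n :=
    LinearMap.congr_fun (LinearMap.congr_fun hφ f) n
  have hjj (n n' : N) : polar Q (j n) (j n') = 0 := by
    simp [polar, ← map_add, hQj]
  -- `Q ∘ φ` need not vanish; subtracting `j ∘ s` from `φ` removes it without halving anything.
  obtain ⟨A, hA⟩ := LinearMap.BilinMap.toQuadraticMap_surjective (Q.comp φ)
  have hAφ (f : Module.Dual K N) : A f f = Q (φ f) := DFunLike.congr_fun hA f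
  let s : Module.Dual K N →ₗ[K] N := (Module.evalEquiv K N).symm.toLinearMap ∘ₗ A
  have hs (f g : Module.Dual K N) : g (s f) = A f g := by simp [s]
  refine ⟨φ - j ∘ₗ s, fun f => ?_, fun f n => ?_⟩
  · rw [LinearMap.sub_apply, LinearMap.comp_apply, sub_eq_neg_add, ← map_neg,
      QuadraticMap.map_add Q, hQj, hφj, map_neg, hs, hAφ]
    ring
  · rw [LinearMap.sub_apply, LinearMap.comp_apply, polar_sub_left, hjj, polar_comm, hφj, sub_zero]

theorem exists_injective_isometry_prod_dualProd [FiniteDimensional K N] (Q : QuadraticForm K V)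
    (R : QuadraticForm K W) (i : W × N →ₗ[K] V) (hi : Function.Injective i)
    (hQi : ∀ x, Q (i x) = R x.1) (hrad : ∀ n, (∀ v, polar Q (i (0, n)) v = 0) → n = 0) :
    ∃ Φ : R.prod (QuadraticForm.dualProd K N) →qᵢ Q, Function.Injective Φ := by
  obtain ⟨ψ, hQψ, hψ⟩ := exists_isotropic_dual_lift Q (i ∘ₗ LinearMap.inr K W N)
    (fun n => by simp [hQi]) hrad
  have hψi (f : Module.Dual K N) (n : N) : polar Q (ψ f) (i (0, n)) = f n := hψ f n
  have hperp (x : W × N) (n : N) : polar Q (i x) (i (0, n)) = 0 := by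
    simp [polar, ← map_add, hQi]
  -- `c` corrects the lift of `W` to `N^⊥` so that it becomes orthogonal to the image of `ψ`.
  let c : W →ₗ[K] N := (Module.evalEquiv K N).symm.toLinearMap ∘ₗ
    (Q.polarBilin.compl₁₂ ψ (i ∘ₗ LinearMap.inl K W N)).flip
  have hc (w : W) (f : Module.Dual K N) : f (c w) = polar Q (ψ f) (i (w, 0)) := by simp [c]
  let Φ : W × (Module.Dual K N × N) →ₗ[K] V :=
    (i ∘ₗ LinearMap.id.prod (-c)).coprod (ψ.coprod (i ∘ₗ LinearMap.inr K W N))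
  have hΦ (w : W) (f : Module.Dual K N) (n : N) : Φ (w, f, n) = i (w, n - c w) + ψ f :=
    calc i (w, -c w) + (ψ f + i (0, n)) = i ((w, -c w) + (0, n)) + ψ f := by rw [map_add]; abel
      _ = i (w, n - c w) + ψ f := by rw [Prod.mk_add_mk, add_zero, neg_add_eq_sub]
  have hpolar (w : W) (f : Module.Dual K N) (n : N) :
      polar Q (i (w, n - c w)) (ψ f) = f n := by
    rw [polar_comm, show (w, n - c w) = (w, 0) + (0, n - c w) by simp, map_add, polar_add_right,
      hψi, map_sub, hc]
    ring
  refine ⟨{ Φ with map_app' := ?_ }, (injective_iff_map_eq_zero Φ).2 ?_⟩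
  · rintro ⟨w, f, n⟩
    calc Q (Φ (w, f, n)) = R w + f n := by
          rw [hΦ, QuadraticMap.map_add Q, hQi, hQψ, hpolar, add_zero]
      _ = R.prod (QuadraticForm.dualProd K N) (w, f, n) := rfl
  · rintro ⟨w, f, n⟩ hx
    rw [hΦ] at hx
    obtain rfl : f = 0 := by
      ext n'
      have h := polar_add_left Q (i (w, n - c w)) (ψ f) (i (0, n'))
      rw [hx, polar_zero_left, hperp, hψi, zero_add] at h
      exact h.symm
    rw [map_zero, add_zero, map_eq_zero_iff i hi, Prod.mk_eq_zero] at hx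
    obtain ⟨rfl, hn⟩ := hx
    simpa using hn

/-- The reduction `V ≅ N^⊥ / N ⊥ H^{⊥ dim N}` along a totally isotropic subspace `N`; the map `i`
identifies `W × N` with `N^⊥`. -/
theorem equivalent_prod_hypPow_of_isotropic [FiniteDimensional K V] (Q : QuadraticForm K V)
    (R : QuadraticForm K W) (i : W × N →ₗ[K] V) (hi : Function.Injective i)
    (hQi : ∀ x, Q (i x) = R x.1) (hrad : ∀ n, (∀ v, polar Q (i (0, n)) v = 0) → n = 0)
    (hdim : Module.finrank K V = Module.finrank K W + 2 * Module.finrank K N) :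
    Q.Equivalent (R.prod (hypPow K (Module.finrank K N))) := by
  have : FiniteDimensional K (W × N) := .of_injective i hi
  have : FiniteDimensional K W := .of_surjective (LinearMap.fst K W N) Prod.fst_surjective
  have : FiniteDimensional K N := .of_surjective (LinearMap.snd K W N) Prod.snd_surjective
  obtain ⟨Φ, hΦ⟩ := exists_injective_isometry_prod_dualProd Q R i hi hQi hrad
  let e : (R.prod (QuadraticForm.dualProd K N)).IsometryEquiv Q :=
    { Φ.toLinearMap.linearEquivOfInjective hΦ (by
        rw [Module.finrank_prod, Module.finrank_prod, Subspace.dual_finrank_eq, hdim, two_mul]) with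
      map_app' := Φ.map_app }
  obtain ⟨h⟩ := dualProd_equivalent_hypPow K N
  exact ⟨e.symm.trans ((QuadraticMap.IsometryEquiv.refl R).prod h)⟩

end IsotropicReduction

section PfisterTransfer

theorem pfister2QF_apply {K : Type*} [CommRing K] (c e : K) (v : (K × K) × (K × K)) :
    pfister2QF K c e v = v.1.1 * v.1.1 + v.1.1 * v.1.2 + e * (v.1.2 * v.1.2) +
      c * (v.2.1 * v.2.1 + v.2.1 * v.2.2 + e * (v.2.2 * v.2.2)) := by
  simp [pfister2QF, binQF, mul_add]

theorem polar_pfister2QF {K : Type*} [CommRing K] (c e : K) (v w : (K × K) × (K × K)) :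
    polar (pfister2QF K c e) v w =
      v.1.1 * w.1.2 + w.1.1 * v.1.2 + c * (v.2.1 * w.2.2 + w.2.1 * v.2.2) +
      2 * (v.1.1 * w.1.1 + e * (v.1.2 * w.1.2) + c * (v.2.1 * w.2.1 + e * (v.2.2 * w.2.2))) := by
  simp only [polar, pfister2QF_apply, Prod.fst_add, Prod.snd_add]
  ring

variable {F L D : Type*} [Field F] [CommRing L] [Algebra F L] [AddCommGroup D] [Module F D]

theorem polar_scharlauTransfer {V : Type*} [AddCommGroup V] [Module L V] [Module F V]
    [IsScalarTower F L V] (t : L →ₗ[F] F) (Q : QuadraticForm L V) (v w : V) :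
    polar (scharlauTransfer V t Q) v w = t (polar Q v w) := by
  simp [polar, scharlauTransfer]

theorem scharlauTransfer_pfister2QF_apply (t : L →ₗ[F] F) (c : L) (a : F)
    (v : (L × L) × (L × L)) :
    scharlauTransfer _ t (pfister2QF L c (algebraMap F L a)) v =
      t (v.1.1 * v.1.1) + t (v.1.1 * v.1.2) + a * t (v.1.2 * v.1.2) +
        (t (c * (v.2.1 * v.2.1)) + t (c * (v.2.1 * v.2.2)) + a * t (c * (v.2.2 * v.2.2))) := by
  rw [scharlauTransfer, LinearMap.compQuadraticMap'_apply, pfister2QF_apply]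
  simp only [mul_add, ← Algebra.smul_def, mul_smul_comm, map_add, map_smul, smul_eq_mul]

/-- Here `ℓ` identifies `F² × D` with `D^⊥` for the bilinear form `t (c w z)`; the reduction is
along the totally isotropic subspace of all `((u, 0), (f, g))` with `u ∈ L` and `f, g ∈ D`. -/
theorem scharlauTransfer_pfister2QF_equivalent (t : L →ₗ[F] F)
    (hnondeg : ∀ u, (∀ z, t (u * z) = 0) → u = 0) (hsq : ∀ u, t (u * u) = 0) (c : L) (e : F)
    (ℓ : (F × F) × D →ₗ[F] L) (hℓ : Function.Injective ℓ)
    (hbil : ∀ s s', t (c * (ℓ s * ℓ s')) = s.1.1 * s'.1.1 + e * (s.1.2 * s'.1.2))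
    (hcℓ : ∀ f, c * ℓ (0, f) = 0 → f = 0)
    (hdim : Module.finrank F L = 2 * Module.finrank F D + 2) (a : F) :
    (scharlauTransfer _ t (pfister2QF L c (algebraMap F L a))).Equivalent
      ((pfister2QF F e a).prod (hypPow F (Module.finrank F (L × (D × D))))) := by
  have htwo : (2 : L) = 0 := hnondeg 2 fun z => by
    have h := hsq (1 + z)
    rw [show (1 + z) * (1 + z) = 1 * 1 + 2 * z + z * z by ring, map_add, map_add, hsq, hsq] at h
    simpa using h
  have : FiniteDimensional F L := .of_finrank_pos (by omega)
  have : FiniteDimensional F D :=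
    .of_injective (ℓ ∘ₗ LinearMap.inr F (F × F) D) (hℓ.comp (Prod.mk_right_injective 0))
  let i : ((F × F) × (F × F)) × (L × (D × D)) →ₗ[F] (L × L) × (L × L) :=
    { toFun := fun x => ((x.2.1, 0),
        (ℓ ((x.1.1.1, x.1.2.1), x.2.2.1), ℓ ((x.1.1.2, x.1.2.2), x.2.2.2)))
      map_add' := fun x y => by simp [← map_add]
      map_smul' := fun r x => by simp [← map_smul] }
  refine equivalent_prod_hypPow_of_isotropic _ _ i ?_ ?_ ?_ ?_
  · rintro ⟨⟨⟨α, β⟩, γ, δ⟩, u, f, g⟩ ⟨⟨⟨α', β'⟩, γ', δ'⟩, u', f', g'⟩ h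
    simpa [i, hℓ.eq_iff, and_assoc, and_left_comm, and_comm] using h
  · rintro ⟨⟨⟨α, β⟩, γ, δ⟩, u, f, g⟩
    simp only [i, LinearMap.coe_mk, AddHom.coe_mk, scharlauTransfer_pfister2QF_apply, hbil, hsq,
      pfister2QF_apply, mul_zero, map_zero]
    ring
  · rintro ⟨u, f, g⟩ h
    have hpolar (v : (L × L) × (L × L)) : t (u * v.1.2 +
        c * (ℓ (0, f) * v.2.2 + v.2.1 * ℓ (0, g))) = 0 := by
      simpa only [i, LinearMap.coe_mk, AddHom.coe_mk, polar_scharlauTransfer,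
        polar_pfister2QF, htwo, mul_zero, zero_mul, add_zero, Prod.fst_zero, Prod.snd_zero,
        Prod.mk_zero_zero] using h v
    refine Prod.ext (hnondeg u fun z => ?_) (Prod.ext (hcℓ f (hnondeg _ fun z => ?_))
      (hcℓ g (hnondeg _ fun z => ?_)))
    · simpa using hpolar ((0, z), (0, 0))
    · simpa [mul_assoc] using hpolar ((0, 0), (0, z))
    · simpa [mul_assoc, mul_comm z] using hpolar ((0, 0), (z, 0))
  · simp only [Module.finrank_prod, hdim, Module.finrank_self]
    ring

end PfisterTransfer

section TopCoeff

variable {R : Type*} [CommRing R] {p : R[X]}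

theorem eq_zero_of_mk_eq_zero (hp : p.Monic) {g : R[X]} (hg : g.natDegree < p.natDegree)
    (h : AdjoinRoot.mk p g = 0) : g = 0 := by
  by_contra hne
  exact hp.not_dvd_of_natDegree_lt hne hg (AdjoinRoot.mk_eq_zero.1 h)

theorem root_mul_mk_divX (p : R[X]) :
    AdjoinRoot.root p * AdjoinRoot.mk p p.divX = -algebraMap R (AdjoinRoot p) (p.coeff 0) := by
  have h := congr_arg (AdjoinRoot.mk p) p.X_mul_divX_add
  rw [map_add, map_mul, AdjoinRoot.mk_X, AdjoinRoot.mk_C, AdjoinRoot.mk_self] at h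
  exact eq_neg_of_add_eq_zero_left h

/-- The functional `t_p` on `R[x]/(p)`: the coefficient of `x ^ (deg p - 1)` in the remainder
modulo `p`. It is only meaningful for `deg p > 0`. -/
noncomputable def topCoeff (hp : p.Monic) : AdjoinRoot p →ₗ[R] R :=
  lcoeff R (p.natDegree - 1) ∘ₗ AdjoinRoot.modByMonicHom hp

theorem topCoeff_mk (hp : p.Monic) {g : R[X]} (hg : g.natDegree < p.natDegree) :
    topCoeff hp (AdjoinRoot.mk p g) = g.coeff (p.natDegree - 1) := by
  nontriviality R
  rw [topCoeff, LinearMap.comp_apply, AdjoinRoot.modByMonicHom_mk,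
    (modByMonic_eq_self_iff hp).2 (degree_lt_degree hg), lcoeff_apply]

theorem eq_topCoeff (hp : p.Monic) {t : AdjoinRoot p →ₗ[R] R}
    (ht : ∀ j < p.natDegree, t (AdjoinRoot.root p ^ j) = if j = p.natDegree - 1 then 1 else 0) :
    t = topCoeff hp := by
  nontriviality R
  refine (AdjoinRoot.powerBasis' hp).basis.ext fun i => ?_
  have hi : (i : ℕ) < p.natDegree := i.2
  rw [PowerBasis.basis_eq_pow, AdjoinRoot.powerBasis'_gen, ht i hi, ← AdjoinRoot.mk_X, ← map_pow,
    topCoeff_mk hp (by rwa [natDegree_X_pow]), coeff_X_pow]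
  simp only [eq_comm]

theorem eq_zero_of_topCoeff_mul_eq_zero (hp : p.Monic) {u : AdjoinRoot p}
    (hu : ∀ z, topCoeff hp (u * z) = 0) : u = 0 := by
  by_contra hu0
  set r := AdjoinRoot.modByMonicHom hp u
  have hru : AdjoinRoot.mk p r = u := AdjoinRoot.mk_leftInverse hp u
  have hr0 : r ≠ 0 := fun h => hu0 (by rw [← hru, h, map_zero])
  have hr : r.natDegree < p.natDegree := by
    obtain ⟨g, rfl⟩ := AdjoinRoot.mk_surjective u
    have := Nontrivial.of_polynomial_ne hr0
    exact natDegree_lt_natDegree hr0 (degree_modByMonic_lt g hp)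
  obtain ⟨k, hk⟩ : ∃ k, p.natDegree = r.natDegree + k + 1 := Nat.exists_eq_add_of_lt hr
  have hrX : (r * X ^ k).natDegree < p.natDegree := by
    have := natDegree_mul_le_of_le (le_refl r.natDegree) (natDegree_X_pow_le (R := R) k)
    omega
  have hlead := hu (AdjoinRoot.mk p (X ^ k))
  rw [← hru, ← map_mul, topCoeff_mk hp hrX, hk, Nat.add_sub_cancel, coeff_mul_X_pow,
    coeff_natDegree, leadingCoeff_eq_zero] at hlead
  exact hr0 hlead

theorem topCoeff_mk_expand {k : ℕ} (hk : 1 < k) {q : R[X]} (hq : expand R k q = p)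
    (hp : p.Monic) (hdeg : 0 < p.natDegree) (h : R[X]) :
    topCoeff hp (AdjoinRoot.mk p (expand R k h)) = 0 := by
  have hk0 : 0 < k := by omega
  have hqmonic : q.Monic := (monic_expand_iff hk0).1 (hq ▸ hp)
  have hqdeg : p.natDegree = q.natDegree * k := by rw [← hq, natDegree_expand]
  have hrem : AdjoinRoot.mk p (expand R k h) = AdjoinRoot.mk p (expand R k (h %ₘ q)) := by
    conv_lhs => rw [← modByMonic_add_div h q]
    rw [map_add, map_mul, hq, map_add, map_mul, AdjoinRoot.mk_self, zero_mul, add_zero]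
  have hlt : (expand R k (h %ₘ q)).natDegree < p.natDegree := by
    rw [natDegree_expand, hqdeg]
    refine Nat.mul_lt_mul_of_pos_right (natDegree_modByMonic_lt h hqmonic fun h1 => ?_) hk0
    simp [hqdeg, h1] at hdeg
  have hndvd : ¬ k ∣ p.natDegree - 1 := fun hdvd =>
    hk.ne' (Nat.dvd_one.1 ((Nat.dvd_sub_iff_right hdeg (hqdeg ▸ dvd_mul_left k _)).1 hdvd))
  rw [hrem, topCoeff_mk hp hlt, coeff_expand hk0, if_neg hndvd]

theorem topCoeff_pow_char [NoZeroDivisors R] (ℓ : ℕ) [Fact ℓ.Prime] [CharP R ℓ] (hp : p.Monic)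
    (hdeg : 0 < p.natDegree) (hinsep : derivative p = 0) (u : AdjoinRoot p) :
    topCoeff hp (u ^ ℓ) = 0 := by
  have hℓ : ℓ.Prime := Fact.out
  obtain ⟨g, rfl⟩ := AdjoinRoot.mk_surjective u
  rw [← map_pow, ← map_frobenius_expand, map_expand]
  exact topCoeff_mk_expand hℓ.one_lt (expand_contract ℓ hinsep hℓ.ne_zero) hp hdeg _

end TopCoeff

section DegreeLTPerp

variable {R : Type*} [CommRing R] {p : R[X]} {n : ℕ}

theorem topCoeff_root_mul_mul (hp : p.Monic) (hdeg : p.natDegree = 2 * n + 2) {f g : R[X]}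
    (hf : f.natDegree ≤ n) (hg : g.natDegree ≤ n) (γ δ : R) :
    topCoeff hp (AdjoinRoot.root p * ((AdjoinRoot.mk p f + γ • AdjoinRoot.mk p p.divX) *
        (AdjoinRoot.mk p g + δ • AdjoinRoot.mk p p.divX))) =
      f.coeff n * g.coeff n - p.coeff 0 * (γ * δ) := by
  set x := AdjoinRoot.root p
  set y := AdjoinRoot.mk p p.divX
  have hsmall {k : R[X]} (hk : k.natDegree ≤ n) : topCoeff hp (AdjoinRoot.mk p k) = 0 := by
    rw [topCoeff_mk hp (by omega), coeff_eq_zero_of_natDegree_lt (by omega)]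
  have hy : topCoeff hp y = 1 := by
    rw [topCoeff_mk hp (by rw [natDegree_divX_eq_natDegree_tsub_one]; omega), coeff_divX,
      Nat.sub_add_cancel (by omega)]
    exact hp
  have hfg : topCoeff hp (AdjoinRoot.mk p (X * (f * g))) = f.coeff n * g.coeff n := by
    have hdegX : (X * (f * g)).natDegree ≤ 1 + (n + n) :=
      natDegree_mul_le_of_le natDegree_X_le (natDegree_mul_le_of_le hf hg)
    rw [topCoeff_mk hp (by omega), show p.natDegree - 1 = n + n + 1 by omega, coeff_X_mul,
      coeff_mul_add_eq_of_natDegree_le hf hg]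
  have hexpand : x * ((AdjoinRoot.mk p f + γ • y) * (AdjoinRoot.mk p g + δ • y)) =
      AdjoinRoot.mk p (X * (f * g)) - (δ * p.coeff 0) • AdjoinRoot.mk p f -
        (γ * p.coeff 0) • AdjoinRoot.mk p g - (γ * δ * p.coeff 0) • y := by
    simp only [Algebra.smul_def, map_mul, AdjoinRoot.mk_X]
    linear_combination (algebraMap R (AdjoinRoot p) δ * AdjoinRoot.mk p f +
      algebraMap R (AdjoinRoot p) γ * AdjoinRoot.mk p g +
      algebraMap R (AdjoinRoot p) γ * algebraMap R (AdjoinRoot p) δ * y) * root_mul_mk_divX p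
  rw [hexpand, map_sub, map_sub, map_sub, map_smul, map_smul, map_smul, hsmall hf, hsmall hg, hy,
    hfg]
  simp only [smul_eq_mul]
  ring

/-- The embedding `((α, γ), f) ↦ α x ^ n + f + γ (p - p(0)) / x` into `R[x]/(p)`. For monic `p` of
degree `2n + 2` its image is the orthogonal complement of the polynomials of degree less than `n`
for the bilinear form `(w, z) ↦ t_p (x w z)`. -/
noncomputable def degreeLTPerp (p : R[X]) (n : ℕ) : (R × R) × degreeLT R n →ₗ[R] AdjoinRoot p :=
  (AdjoinRoot.mkₐ p).toLinearMap ∘ₗ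
    ((monomial n).coprod (LinearMap.toSpanSingleton R R[X] p.divX)).coprod (degreeLT R n).subtype

theorem degreeLTPerp_apply (s : (R × R) × degreeLT R n) :
    degreeLTPerp p n s = AdjoinRoot.mk p (monomial n s.1.1 + s.1.2 • p.divX + s.2) :=
  rfl

theorem topCoeff_root_mul_degreeLTPerp_mul (hp : p.Monic) (hdeg : p.natDegree = 2 * n + 2)
    (s s' : (R × R) × degreeLT R n) :
    topCoeff hp (AdjoinRoot.root p * (degreeLTPerp p n s * degreeLTPerp p n s')) =
      s.1.1 * s'.1.1 - p.coeff 0 * (s.1.2 * s'.1.2) := by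
  have hnatDegree (s : (R × R) × degreeLT R n) : (monomial n s.1.1 + s.2 : R[X]).natDegree ≤ n :=
    natDegree_add_le_of_degree_le (natDegree_monomial_le _)
      (natDegree_le_of_degree_le (mem_degreeLT.1 s.2.2).le)
  have hcoeff (s : (R × R) × degreeLT R n) : (monomial n s.1.1 + s.2 : R[X]).coeff n = s.1.1 := by
    rw [coeff_add, coeff_monomial_same, coeff_eq_zero_of_degree_lt (mem_degreeLT.1 s.2.2), add_zero]
  have hsplit (s : (R × R) × degreeLT R n) : degreeLTPerp p n s =
      AdjoinRoot.mk p (monomial n s.1.1 + s.2) + s.1.2 • AdjoinRoot.mk p p.divX := by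
    rw [degreeLTPerp_apply, add_right_comm, map_add _ _ (s.1.2 • p.divX), AdjoinRoot.smul_mk]
  rw [hsplit, hsplit, topCoeff_root_mul_mul hp hdeg (hnatDegree s) (hnatDegree s'), hcoeff, hcoeff]

theorem degreeLTPerp_injective (hp : p.Monic) (hdeg : p.natDegree = 2 * n + 2) :
    Function.Injective (degreeLTPerp p n) := by
  rw [injective_iff_map_eq_zero]
  rintro ⟨⟨α, γ⟩, f⟩ h
  rw [degreeLTPerp_apply] at h
  have hdivX : p.divX.natDegree = 2 * n + 1 := by
    rw [natDegree_divX_eq_natDegree_tsub_one, hdeg]; rfl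
  have hcoeff (k : ℕ) (hk : n ≤ k) : (f : R[X]).coeff k = 0 :=
    (degree_lt_iff_coeff_zero _ n).1 (mem_degreeLT.1 f.2) k hk
  have hnatDegree : (monomial n α + γ • p.divX + f : R[X]).natDegree ≤ 2 * n + 1 := by
    have hmonomial := natDegree_monomial_le (m := n) α
    have hsmul := natDegree_smul_le γ p.divX
    have hf := natDegree_le_of_degree_le (mem_degreeLT.1 f.2).le
    exact natDegree_add_le_of_degree_le (natDegree_add_le_of_degree_le (by omega) (by omega))
      (by omega)
  have hzero : monomial n α + γ • p.divX + (f : R[X]) = 0 := eq_zero_of_mk_eq_zero hp (by omega) h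
  obtain rfl : γ = 0 := by
    have htop : p.coeff (2 * n + 1 + 1) = 1 := hdeg ▸ hp
    simpa [coeff_monomial, hcoeff (2 * n + 1) (by omega), show n ≠ 2 * n + 1 by omega, htop]
      using congr_arg (coeff · (2 * n + 1)) hzero
  obtain rfl : α = 0 := by
    simpa [hcoeff n le_rfl] using congr_arg (coeff · n) hzero
  simpa using hzero

theorem eq_zero_of_root_mul_degreeLTPerp (hp : p.Monic) (hdeg : p.natDegree = 2 * n + 2)
    {f : degreeLT R n} (hf : AdjoinRoot.root p * degreeLTPerp p n (0, f) = 0) : f = 0 := by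
  have hnatDegree : (X * (f : R[X])).natDegree ≤ 1 + n :=
    natDegree_mul_le_of_le natDegree_X_le (natDegree_le_of_degree_le (mem_degreeLT.1 f.2).le)
  have hmk : AdjoinRoot.mk p (X * (f : R[X])) = 0 := by
    simpa [degreeLTPerp_apply] using hf
  exact Subtype.ext ((monic_X.mul_right_eq_zero_iff).1 (eq_zero_of_mk_eq_zero hp (by omega) hmk))

end DegreeLTPerp

theorem transfer_pfister_x_a_inseparable_general
    (F : Type*) [Field F] [CharP F 2] (p : Polynomial F)
    (hmonic : p.Monic) (hinsep : Polynomial.derivative p = 0)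
    (d : ℕ) (hd : p.natDegree = d) (hd0 : 0 < d)
    (t : AdjoinRoot p →ₗ[F] F)
    (ht : ∀ j : ℕ, j < d → t (AdjoinRoot.root p ^ j) = if j = d - 1 then 1 else 0)
    (a : F) :
    (scharlauTransfer _ t
      (pfister2QF (AdjoinRoot p) (AdjoinRoot.root p) (algebraMap F (AdjoinRoot p) a))).Equivalent
      ((pfister2QF F (p.coeff 0) a).prod (hypPow F (2 * (d - 1)))) := by
  obtain rfl : t = topCoeff hmonic := eq_topCoeff hmonic (hd ▸ ht)
  obtain ⟨n, hn⟩ : ∃ n, p.natDegree = 2 * n + 2 := by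
    have h := natDegree_expand 2 (contract 2 p)
    rw [expand_contract 2 hinsep two_ne_zero] at h
    exact ⟨(contract 2 p).natDegree - 1, by omega⟩
  have : Module.Finite F (AdjoinRoot p) := hmonic.finite_adjoinRoot
  have hL : Module.finrank F (AdjoinRoot p) = p.natDegree :=
    (AdjoinRoot.powerBasis' hmonic).finrank
  have hD : Module.finrank F (degreeLT F n) = n := by
    rw [(degreeLTEquiv F n).finrank_eq, Module.finrank_fin_fun]
  have hr : Module.finrank F (AdjoinRoot p × (degreeLT F n × degreeLT F n)) = 2 * (d - 1) := by
    have := (degreeLTEquiv F n).symm.finiteDimensional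
    rw [Module.finrank_prod, Module.finrank_prod, hL, hD]
    omega
  rw [← hr]
  refine scharlauTransfer_pfister2QF_equivalent _ (fun u => eq_zero_of_topCoeff_mul_eq_zero hmonic)
    (fun u => pow_two u ▸ topCoeff_pow_char 2 hmonic (by omega) hinsep u) _ _
    (degreeLTPerp p n) (degreeLTPerp_injective hmonic hn) (fun s s' => ?_)
    (fun f => eq_zero_of_root_mul_degreeLTPerp hmonic hn) (by omega) a
  rw [topCoeff_root_mul_degreeLTPerp_mul hmonic hn, CharTwo.sub_eq_add]

/-- Lemma 4.2(iii): for `p` monic irreducible and inseparable over a field `F` of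
characteristic `2`, the Scharlau transfer of `⟨⟨x; a]]` is Witt equivalent to
`⟨⟨p_d; a]]`, where `p_d` is the constant coefficient of `p`. -/
theorem transfer_pfister_x_a_inseparable
    (F : Type*) [Field F] [CharP F 2] (p : Polynomial F)
    (hmonic : p.Monic) (hirr : Irreducible p) (hinsep : Polynomial.derivative p = 0)
    (d : ℕ) (hd : p.natDegree = d)
    (t : AdjoinRoot p →ₗ[F] F)
    (ht : ∀ j : ℕ, j < d → t (AdjoinRoot.root p ^ j) = if j = d - 1 then 1 else 0)
    (a : F) :
    WittEquiv
      (scharlauTransfer _ t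
        (pfister2QF (AdjoinRoot p) (AdjoinRoot.root p) (algebraMap F (AdjoinRoot p) a)))
      (pfister2QF F (p.coeff 0) a) := by
  subst hd
  exact .of_equivalent_prod_hypPow (transfer_pfister_x_a_inseparable_general F p hmonic hinsep _ rfl
    hirr.natDegree_pos t ht a)
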